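/- arXiv:1303.6122 — 2 statements merged into one kernel-verified Lean document; each statement's English description precedes it below -/
import Mathlib

section
/- The f-vector of the 24-cell is (24, 96, 96, 24): for the 24-cell 𝒞 = convexHull ℝ V, the number of proper exposed faces F of 𝒞 whose affine span has dimension k is 24 for k = 0, 96 for k = 1, 96 for k = 2, and 24 for k = 3. -/
open scoped RealInnerProductSpace Pointwise

/-- The `i`-th standard basis vector of `EuclideanSpace ℝ (Fin 4)`. -/
noncomputable def stdV (i : Fin 4) : EuclideanSpace ℝ (Fin 4) :=
  EuclideanSpace.single i (1 : ℝ)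

/-- The 24 vertices of the 24-cell: all permutations of the coordinates of `(±1, ±1, 0, 0)`. -/
def cellV : Set (EuclideanSpace ℝ (Fin 4)) :=
  {x | ∃ i j : Fin 4, i ≠ j ∧ ∃ ε δ : ℝ, (ε = 1 ∨ ε = -1) ∧ (δ = 1 ∨ δ = -1) ∧
    x = ε • stdV i + δ • stdV j}

/-- The 8 green vectors `±eᵢ`. -/
def colG : Set (EuclideanSpace ℝ (Fin 4)) :=
  {x | ∃ i : Fin 4, x = stdV i ∨ x = -stdV i}

/-- The 8 red vectors `(±1/2, ±1/2, ±1/2, ±1/2)` with an even number of minus signs. -/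
def colR : Set (EuclideanSpace ℝ (Fin 4)) :=
  {x | ∃ ε : Fin 4 → ℝ, (∀ i, ε i = 1 ∨ ε i = -1) ∧ (∏ i, ε i) = 1 ∧ ∀ i, x i = ε i / 2}

/-- The 8 blue vectors `(±1/2, ±1/2, ±1/2, ±1/2)` with an odd number of minus signs. -/
def colB : Set (EuclideanSpace ℝ (Fin 4)) :=
  {x | ∃ ε : Fin 4 → ℝ, (∀ i, ε i = 1 ∨ ε i = -1) ∧ (∏ i, ε i) = -1 ∧ ∀ i, x i = ε i / 2}

/-- The polar of a subset of `EuclideanSpace ℝ (Fin 4)`. -/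
def polarSet (S : Set (EuclideanSpace ℝ (Fin 4))) : Set (EuclideanSpace ℝ (Fin 4)) :=
  {y | ∀ x ∈ S, ⟪x, y⟫ ≤ 1}

/-- The proper exposed faces of a compact convex set `K`: nonempty exposed subsets
that are strictly contained in `K`. -/
def properFaces (K : Set (EuclideanSpace ℝ (Fin 4))) : Set (Set (EuclideanSpace ℝ (Fin 4))) :=
  {F | F.Nonempty ∧ F ⊂ K ∧ IsExposed ℝ K F}

/-- The dimension of a face: the rank of the direction of its affine span. -/
noncomputable def faceDim (F : Set (EuclideanSpace ℝ (Fin 4))) : ℕ :=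
  Module.finrank ℝ (affineSpan ℝ F).direction

/-!
An exposed face of `convexHull ℝ V` is the convex hull of the points of `V` where a linear
functional is maximal, so it suffices to find these sets of maximizers on the 24 vertices, which are
the integer vectors of squared length 2 in `ℤ⁴`. Let `C` be such a set, other than `V` itself; the
maximum is then positive because `V = -V`, and vertices of `C` have nonnegative inner product, since
otherwise their sum would be a vertex at twice the height. If `x, y ∈ C` are orthogonal, then
`n = x + y` has squared length 4, and `C` consists of the six vertices `z` with `⟪n, z⟫ = 2`, an
octahedron. If no two are, then `C` is a clique of nearest neighbours, with inner product 1; it has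
at most three elements, because inner products with vectors of squared length 4 are even. Conversely
every clique is the set of maximizers of the sum of its members. Counting gives 24 vertices,
96 edges, 96 triangles, and 24 octahedra, one for each `n`.
-/

section ConvexHull

variable {𝕜 E : Type*} [Field 𝕜] [LinearOrder 𝕜] [IsStrictOrderedRing 𝕜] [AddCommGroup E]
  [Module 𝕜 E] {V F : Set E}

theorem convexHull_inter_of_isExtreme (hF : IsExtreme 𝕜 (convexHull 𝕜 V) F) (hconv : Convex 𝕜 F) :
    convexHull 𝕜 (F ∩ V) = F := by
  refine (convexHull_min Set.inter_subset_left hconv).antisymm fun x hx => ?_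
  have hdiff : convexHull 𝕜 (V \ F) ⊆ convexHull 𝕜 V \ F :=
    convexHull_min (Set.sdiff_subset_sdiff_left (subset_convexHull 𝕜 V))
      (hF.convex_sdiff (convex_convexHull 𝕜 V))
  have hxV : x ∈ convexHull 𝕜 (F ∩ V ∪ V \ F) := by
    rw [Set.inter_comm, Set.inter_union_sdiff]
    exact hF.subset hx
  obtain hempty | hin := (F ∩ V).eq_empty_or_nonempty
  · rw [hempty, Set.empty_union] at hxV
    exact absurd hx (hdiff hxV).2
  obtain hempty | hout := (V \ F).eq_empty_or_nonempty
  · rwa [hempty, Set.union_empty] at hxV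
  rw [convexHull_union hin hout, mem_convexJoin] at hxV
  obtain ⟨a, ha, b, hb, hab⟩ := hxV
  have haF : a ∈ F := convexHull_min Set.inter_subset_left hconv ha
  obtain ⟨hbV, hbF⟩ := hdiff hb
  obtain rfl | hax := eq_or_ne a x
  · exact ha
  have hopen : x ∈ openSegment 𝕜 a b :=
    mem_openSegment_of_ne_left_right hax (ne_of_mem_of_not_mem hx hbF).symm hab
  exact absurd (hF.right_mem_of_mem_openSegment (hF.subset haF) hbV hx hopen) hbF

variable [TopologicalSpace 𝕜] [TopologicalSpace E] (l : StrongDual 𝕜 E)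

theorem toExposed_convexHull_inter : l.toExposed (convexHull 𝕜 V) ∩ V = l.toExposed V := by
  ext x
  refine ⟨fun ⟨⟨_, hmax⟩, hx⟩ => ⟨hx, fun y hy => hmax y (subset_convexHull 𝕜 V hy)⟩,
    fun ⟨hx, hmax⟩ => ⟨⟨subset_convexHull 𝕜 V hx, fun y hy => ?_⟩, hx⟩⟩
  exact convexHull_min hmax (convex_halfSpace_le l.toLinearMap.isLinear (l x)) hy

theorem toExposed_convexHull : l.toExposed (convexHull 𝕜 V) = convexHull 𝕜 (l.toExposed V) := by
  have hexp : IsExposed 𝕜 (convexHull 𝕜 V) (l.toExposed (convexHull 𝕜 V)) :=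
    ContinuousLinearMap.toExposed.isExposed
  rw [← convexHull_inter_of_isExtreme hexp.isExtreme (hexp.convex (convex_convexHull 𝕜 V)),
    toExposed_convexHull_inter]

end ConvexHull

theorem finrank_vectorSpan_lt_of_isExposed {𝕜 E : Type*} [TopologicalSpace 𝕜] [Field 𝕜]
    [PartialOrder 𝕜] [AddCommGroup E] [TopologicalSpace E] [Module 𝕜 E] [FiniteDimensional 𝕜 E]
    {S T : Set E} (hST : IsExposed 𝕜 T S) (hne : S.Nonempty) (hss : S ⊂ T) :
    Module.finrank 𝕜 (vectorSpan 𝕜 S) < Module.finrank 𝕜 (vectorSpan 𝕜 T) := by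
  obtain ⟨l, rfl⟩ := hST hne
  obtain ⟨s, hs⟩ := hne
  obtain ⟨t, ht, htS⟩ := Set.exists_of_ssubset hss
  refine Submodule.finrank_lt_finrank_of_lt ((vectorSpan_mono 𝕜 hss.subset).lt_of_ne fun h => ?_)
  have hker : vectorSpan 𝕜 {x ∈ T | ∀ y ∈ T, l y ≤ l x} ≤ LinearMap.ker l.toLinearMap := by
    rw [vectorSpan_def, Submodule.span_le]
    rintro _ ⟨x, hx, y, hy, rfl⟩
    simpa [sub_eq_zero] using (hy.2 x hx.1).antisymm (hx.2 y hy.1)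
  have hsub : t - s ∈ vectorSpan 𝕜 {x ∈ T | ∀ y ∈ T, l y ≤ l x} :=
    h ▸ vsub_mem_vectorSpan 𝕜 ht (hss.subset hs)
  have hlt : l t = l s := by simpa [sub_eq_zero] using hker hsub
  exact htS ⟨ht, fun y hy => hlt ▸ hs.2 y hy⟩

theorem affineIndependent_of_inner_eq {ι E : Type*} [NormedAddCommGroup E] [InnerProductSpace ℝ E]
    {p : ι → E} {c d : ℝ} (hcd : c ≠ d) (hd : ∀ i, ⟪p i, p i⟫ = d)
    (hc : ∀ i j, i ≠ j → ⟪p i, p j⟫ = c) : AffineIndependent ℝ p := by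
  classical
  refine affineIndependent_iff.2 fun s w hw hp i hi => ?_
  have hinner (j : ι) : ⟪p i, p j⟫ = c + if i = j then d - c else 0 := by
    split_ifs with hij
    · rw [← hij, hd, add_sub_cancel]
    · rw [hc i j hij, add_zero]
  have hzero : ⟪p i, ∑ j ∈ s, w j • p j⟫ = w i * (d - c) := by
    simp [inner_sum, inner_smul_right, hinner, mul_add, Finset.sum_add_distrib, ← Finset.sum_mul,
      hw, hi]
  rw [hp, inner_zero_right] at hzero
  exact (mul_eq_zero.1 hzero.symm).resolve_right (sub_ne_zero.2 hcd.symm)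

section ProperFaces

variable {K F V : Set (EuclideanSpace ℝ (Fin 4))}

theorem mem_properFaces_iff :
    F ∈ properFaces K ↔ F.Nonempty ∧ F ≠ K ∧
      ∃ l : StrongDual ℝ (EuclideanSpace ℝ (Fin 4)), F = l.toExposed K :=
  ⟨fun ⟨hne, hss, hexp⟩ => ⟨hne, hss.ne, hexp hne⟩,
    fun ⟨hne, hK, hexp⟩ => ⟨hne, (IsExposed.subset fun _ => hexp).ssubset_of_ne hK, fun _ => hexp⟩⟩

theorem mem_properFaces_of_ssubset {L : Set (EuclideanSpace ℝ (Fin 4))} (hF : F ∈ properFaces K)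
    (hFL : F ⊂ L) (hLK : L ⊆ K) : F ∈ properFaces L :=
  ⟨hF.1, hFL, hF.2.2.mono hLK hFL.subset⟩

theorem convexHull_inter_of_mem_properFaces (hF : F ∈ properFaces V) : convexHull ℝ F ∩ V = F := by
  obtain ⟨-, -, l, rfl⟩ := mem_properFaces_iff.1 hF
  rw [← toExposed_convexHull, toExposed_convexHull_inter]

theorem properFaces_convexHull : properFaces (convexHull ℝ V) = convexHull ℝ '' properFaces V := by
  ext F
  constructor
  · intro hF
    obtain ⟨hne, hK, l, rfl⟩ := mem_properFaces_iff.1 hF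
    rw [toExposed_convexHull] at hne hK ⊢
    exact ⟨_, mem_properFaces_iff.2 ⟨convexHull_nonempty_iff.1 hne, fun h => hK (by rw [h]),
      l, rfl⟩, rfl⟩
  · rintro ⟨S, hS, rfl⟩
    obtain ⟨hne, hV, l, hl⟩ := mem_properFaces_iff.1 hS
    refine mem_properFaces_iff.2 ⟨hne.convexHull, fun h => hV ?_, l, ?_⟩
    · rw [← convexHull_inter_of_mem_properFaces hS, h,
        Set.inter_eq_right.2 (subset_convexHull ℝ V)]
    · rw [toExposed_convexHull, ← hl]

theorem faceDim_eq_finrank_vectorSpan (S : Set (EuclideanSpace ℝ (Fin 4))) :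
    faceDim S = Module.finrank ℝ (vectorSpan ℝ S) := by
  rw [faceDim, direction_affineSpan]

theorem faceDim_convexHull (S : Set (EuclideanSpace ℝ (Fin 4))) :
    faceDim (convexHull ℝ S) = faceDim S := by
  rw [faceDim, affineSpan_convexHull, faceDim]

theorem faceDim_lt_of_mem_properFaces (hF : F ∈ properFaces K) : faceDim F < faceDim K := by
  obtain ⟨hne, hss, hexp⟩ := hF
  simp only [faceDim_eq_finrank_vectorSpan]
  exact finrank_vectorSpan_lt_of_isExposed hexp hne hss

theorem faceDim_le_four (S : Set (EuclideanSpace ℝ (Fin 4))) : faceDim S ≤ 4 := by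
  simpa [faceDim] using Submodule.finrank_le (affineSpan ℝ S).direction

theorem ncard_properFaces_convexHull (V : Set (EuclideanSpace ℝ (Fin 4))) (k : ℕ) :
    {F ∈ properFaces (convexHull ℝ V) | faceDim F = k}.ncard =
      {F ∈ properFaces V | faceDim F = k}.ncard := by
  have himage : {F ∈ properFaces (convexHull ℝ V) | faceDim F = k} =
      convexHull ℝ '' {F ∈ properFaces V | faceDim F = k} := by
    rw [properFaces_convexHull]
    ext F
    constructor
    · rintro ⟨⟨S, hS, rfl⟩, hk⟩
      exact ⟨S, ⟨hS, (faceDim_convexHull S).symm.trans hk⟩, rfl⟩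
    · rintro ⟨S, ⟨hS, hk⟩, rfl⟩
      exact ⟨⟨S, hS, rfl⟩, (faceDim_convexHull S).trans hk⟩
  rw [himage]
  refine Set.InjOn.ncard_image fun S hS T hT hST => ?_
  rw [← convexHull_inter_of_mem_properFaces hS.1, hST, convexHull_inter_of_mem_properFaces hT.1]

end ProperFaces
section Shells

variable {ι : Type*} [Fintype ι]

theorem two_mul_dotProduct_lt {R : Type*} [CommRing R] [LinearOrder R] [IsStrictOrderedRing R]
    {x y : ι → R} (hxy : x ≠ y) : 2 * (x ⬝ᵥ y) < x ⬝ᵥ x + y ⬝ᵥ y := by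
  have hnonneg : 0 ≤ (x - y) ⬝ᵥ (x - y) := Finset.sum_nonneg fun i _ => mul_self_nonneg _
  have hpos : 0 < (x - y) ⬝ᵥ (x - y) :=
    hnonneg.lt_of_ne' (dotProduct_self_eq_zero.not.2 (sub_ne_zero.2 hxy))
  simp only [sub_dotProduct, dotProduct_sub, dotProduct_comm y x] at hpos
  linarith

variable [DecidableEq ι]

/-- The integer vectors of squared length `d`. In `ℤ⁴`, the 24 vectors of squared length 2 are the
vertices of the 24-cell, and the 24 vectors of squared length 4 are the normals of its facets. -/
noncomputable def shell (d : ℤ) : Finset (ι → ℤ) :=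
  {x ∈ Fintype.piFinset fun _ => Finset.Icc (-Int.sqrt d) (Int.sqrt d) | x ⬝ᵥ x = d}

theorem mem_shell {d : ℤ} {x : ι → ℤ} : x ∈ shell d ↔ x ⬝ᵥ x = d := by
  refine ⟨fun h => (Finset.mem_filter.1 h).2, fun h => Finset.mem_filter.2 ⟨?_, h⟩⟩
  have hsq (i : ι) : x i * x i ≤ d :=
    h ▸ Finset.single_le_sum (f := fun i => x i * x i) (fun i _ => mul_self_nonneg _)
      (Finset.mem_univ i)
  refine Fintype.mem_piFinset.2 fun i => Finset.mem_Icc.2 (abs_le.1 ?_)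
  exact (Int.abs_le_sqrt ((mul_self_nonneg _).trans (hsq i))).2 (hsq i)

variable {a b : ℤ} {x y : ι → ℤ}

theorem neg_mem_shell (hx : x ∈ shell a) : -x ∈ shell a := by
  rw [mem_shell] at hx ⊢
  simpa using hx

theorem add_mem_shell (hx : x ∈ shell a) (hy : y ∈ shell b) :
    x + y ∈ shell (a + 2 * (x ⬝ᵥ y) + b) := by
  rw [mem_shell] at hx hy ⊢
  simp only [add_dotProduct, dotProduct_add, dotProduct_comm y x, hx, hy]
  ring

theorem sub_mem_shell (hx : x ∈ shell a) (hy : y ∈ shell b) :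
    x - y ∈ shell (a - 2 * (x ⬝ᵥ y) + b) := by
  simpa [sub_eq_add_neg] using add_mem_shell hx (neg_mem_shell hy)

theorem dotProduct_le_one_of_mem_shell (hx : x ∈ shell 2) (hy : y ∈ shell 2) (hxy : x ≠ y) :
    x ⬝ᵥ y ≤ 1 := by
  have hlt := two_mul_dotProduct_lt hxy
  rw [mem_shell.1 hx, mem_shell.1 hy] at hlt
  omega

end Shells

section MaxLevelSets

/-- `C` is the set of points of `A` at which `f` attains its maximum `c` over `A`; the finite
counterpart of an exposed face, with the maximum as part of the data. -/
structure IsMaxLevelSet {α M : Type*} [LE M] (f : α → M) (c : M) (A C : Finset α) : Prop where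
  le : ∀ x ∈ A, f x ≤ c
  mem_iff : ∀ x, x ∈ C ↔ x ∈ A ∧ f x = c

theorem IsMaxLevelSet.image_eq_toExposed {𝕜 α E : Type*} [TopologicalSpace 𝕜] [Ring 𝕜]
    [PartialOrder 𝕜] [AddCommMonoid E] [TopologicalSpace E] [Module 𝕜 E] {A C : Finset α}
    {g : α → E} {l : StrongDual 𝕜 E} {c : 𝕜}
    (hC : IsMaxLevelSet (fun x => l (g x)) c A C) (hne : C.Nonempty) :
    g '' C = l.toExposed (g '' A) := by
  obtain ⟨x₀, hx₀⟩ := hne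
  obtain ⟨hx₀A, hx₀c⟩ := (hC.mem_iff x₀).1 hx₀
  ext v
  constructor
  · rintro ⟨x, hx, rfl⟩
    obtain ⟨hxA, hxc⟩ := (hC.mem_iff x).1 hx
    refine ⟨Set.mem_image_of_mem g hxA, ?_⟩
    rintro _ ⟨y, hy, rfl⟩
    exact (hC.le y hy).trans_eq hxc.symm
  · rintro ⟨⟨x, hx, rfl⟩, hmax⟩
    refine Set.mem_image_of_mem g ((hC.mem_iff x).2 ⟨hx, (hC.le x hx).antisymm ?_⟩)
    exact hx₀c.symm.trans_le (hmax _ (Set.mem_image_of_mem g hx₀A))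

variable {ι M : Type*} [Fintype ι] [DecidableEq ι] [AddCommGroup M] [LinearOrder M]
  [IsOrderedAddMonoid M] {φ : (ι → ℤ) →+ M} {h : M} {C : Finset (ι → ℤ)} {x y : ι → ℤ}

theorem IsMaxLevelSet.pos_iff_ne_shell {d : ℤ} {f : (ι → ℤ) → M} (hf : f.Odd)
    (hC : IsMaxLevelSet f h (shell d) C) (hne : C.Nonempty) : 0 < h ↔ C ≠ shell d := by
  constructor
  · rintro hh rfl
    obtain ⟨x, hx⟩ := hne
    have hfx := ((hC.mem_iff x).1 hx).2
    have hfneg := ((hC.mem_iff _).1 (neg_mem_shell hx)).2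
    rw [hf, hfx] at hfneg
    grind
  · contrapose!
    intro hh
    ext x
    refine ⟨fun hx => ((hC.mem_iff x).1 hx).1, fun hx => (hC.mem_iff x).2 ⟨hx, ?_⟩⟩
    have hle := hC.le x hx
    have hleneg := hC.le _ (neg_mem_shell hx)
    rw [hf] at hleneg
    grind

theorem IsMaxLevelSet.dotProduct_nonneg (hC : IsMaxLevelSet φ h (shell 2) C) (hh : 0 < h)
    (hx : x ∈ C) (hy : y ∈ C) : 0 ≤ x ⬝ᵥ y := by
  obtain ⟨hx2, hφx⟩ := (hC.mem_iff x).1 hx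
  obtain ⟨hy2, hφy⟩ := (hC.mem_iff y).1 hy
  by_contra! hneg
  have hne : x ≠ -y := by
    rintro rfl
    rw [map_neg, hφy] at hφx
    grind
  have hle := dotProduct_le_one_of_mem_shell hx2 (neg_mem_shell hy2) hne
  rw [dotProduct_neg] at hle
  have hadd : x + y ∈ shell 2 := by
    simpa [show x ⬝ᵥ y = -1 by omega] using add_mem_shell hx2 hy2
  have hφ := hC.le _ hadd
  rw [map_add, hφx, hφy] at hφ
  grind

end MaxLevelSets

section Simplices

variable {ι : Type*} [Fintype ι] [DecidableEq ι]

/-- The sets of `m` pairwise nearest neighbours among the integer vectors of squared length 2: the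
vertex sets of the simplicial faces of the 24-cell. -/
noncomputable def simplices (ι : Type*) [Fintype ι] [DecidableEq ι] (m : ℕ) :
    Finset (Finset (ι → ℤ)) :=
  {C ∈ (shell 2).powersetCard m | ∀ x ∈ C, ∀ y ∈ C, x ≠ y → x ⬝ᵥ y = 1}

variable {m : ℕ} {C : Finset (ι → ℤ)} {x y : ι → ℤ}

theorem mem_simplices :
    C ∈ simplices ι m ↔ C ⊆ shell 2 ∧ C.card = m ∧ ∀ x ∈ C, ∀ y ∈ C, x ≠ y → x ⬝ᵥ y = 1 := by
  rw [simplices, Finset.mem_filter, Finset.mem_powersetCard, and_assoc]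

theorem sum_dotProduct_of_mem_simplices (hC : C ∈ simplices ι m) (hx : x ∈ C) :
    (∑ y ∈ C, y) ⬝ᵥ x = m + 1 := by
  obtain ⟨hsub, rfl, hadj⟩ := mem_simplices.1 hC
  have hrest : ∑ y ∈ C.erase x, y ⬝ᵥ x = (C.erase x).card := by
    rw [Finset.cast_card]
    exact Finset.sum_congr rfl fun y hy =>
      hadj y (Finset.mem_of_mem_erase hy) x hx (Finset.ne_of_mem_erase hy)
  rw [sum_dotProduct, ← Finset.add_sum_erase C _ hx, mem_shell.1 (hsub hx), hrest,
    ← Finset.card_erase_add_one hx]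
  push_cast
  ring

theorem sum_dotProduct_le_of_notMem (hC : C ∈ simplices ι m) (hx : x ∈ shell 2) (hxC : x ∉ C) :
    (∑ y ∈ C, y) ⬝ᵥ x ≤ m := by
  obtain ⟨hsub, rfl, -⟩ := mem_simplices.1 hC
  rw [sum_dotProduct, Finset.cast_card]
  exact Finset.sum_le_sum fun y hy =>
    dotProduct_le_one_of_mem_shell (hsub hy) hx (ne_of_mem_of_not_mem hy hxC)

theorem isMaxLevelSet_of_mem_simplices (hC : C ∈ simplices ι m) :
    IsMaxLevelSet ((∑ y ∈ C, y) ⬝ᵥ ·) (m + 1 : ℤ) (shell 2) C where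
  le x hx := by
    by_cases hxC : x ∈ C
    · exact (sum_dotProduct_of_mem_simplices hC hxC).le
    · exact (sum_dotProduct_le_of_notMem hC hx hxC).trans (by omega)
  mem_iff x := by
    refine ⟨fun hxC => ⟨(mem_simplices.1 hC).1 hxC, sum_dotProduct_of_mem_simplices hC hxC⟩,
      fun ⟨hx, hmax⟩ => ?_⟩
    by_contra hxC
    exact absurd (hmax.symm.trans_le (sum_dotProduct_le_of_notMem hC hx hxC)) (by omega)

end Simplices

section Octahedra

/-- The vectors of squared length 2 having inner product 2 with `n`. For `n : Fin 4 → ℤ` of squared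
length 4, they are the vertices of an octahedral facet of the 24-cell. -/
noncomputable def octahedron {ι : Type*} [Fintype ι] [DecidableEq ι] (n : ι → ℤ) :
    Finset (ι → ℤ) :=
  {x ∈ shell 2 | n ⬝ᵥ x = 2}

theorem mem_octahedron {ι : Type*} [Fintype ι] [DecidableEq ι] {n x : ι → ℤ} :
    x ∈ octahedron n ↔ x ∈ shell 2 ∧ n ⬝ᵥ x = 2 := by
  rw [octahedron, Finset.mem_filter]

theorem sub_mem_octahedron {ι : Type*} [Fintype ι] [DecidableEq ι] {n x : ι → ℤ}
    (hn : n ∈ shell 4) (hx : x ∈ octahedron n) : n - x ∈ octahedron n := by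
  obtain ⟨hx2, hnx⟩ := mem_octahedron.1 hx
  refine mem_octahedron.2 ⟨by simpa [hnx] using sub_mem_shell hn hx2, ?_⟩
  rw [dotProduct_sub, mem_shell.1 hn, hnx]
  norm_num

variable {n x : Fin 4 → ℤ}

-- The coordinates of `n` all have the same parity, and the coordinate sum of `x` is even.
theorem even_dotProduct_of_mem_shell :
    ∀ n ∈ shell 4, ∀ x : Fin 4 → ℤ, x ∈ shell 2 → Even (n ⬝ᵥ x) := by
  decide +kernel

theorem exists_add_dotProduct_eq_three :
    ∀ n ∈ shell 4, ∀ x ∈ shell 2, n ⬝ᵥ x = 0 →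
      ∃ y : Fin 4 → ℤ, y ∈ shell 2 ∧ (n + x) ⬝ᵥ y = 3 := by
  decide +kernel

theorem exists_simplices_subset_octahedron :
    ∀ n ∈ shell 4, ∃ C ∈ simplices (Fin 4) 3, C ⊆ octahedron n := by
  decide +kernel

theorem dotProduct_le_two_of_mem_shell (hn : n ∈ shell 4) (hx : x ∈ shell 2) : n ⬝ᵥ x ≤ 2 := by
  have hne : n ≠ x := by
    rintro rfl
    exact absurd ((mem_shell.1 hn).symm.trans (mem_shell.1 hx)) (by norm_num)
  have hlt := two_mul_dotProduct_lt hne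
  rw [mem_shell.1 hn, mem_shell.1 hx] at hlt
  obtain ⟨r, hr⟩ := even_dotProduct_of_mem_shell n hn x hx
  omega

theorem isMaxLevelSet_octahedron (hn : n ∈ shell 4) :
    IsMaxLevelSet (n ⬝ᵥ ·) 2 (shell 2) (octahedron n) where
  le _ hx := dotProduct_le_two_of_mem_shell hn hx
  mem_iff _ := mem_octahedron

theorem octahedron_nonempty (hn : n ∈ shell 4) : (octahedron n).Nonempty := by
  obtain ⟨C, hC, hCn⟩ := exists_simplices_subset_octahedron n hn
  exact (Finset.card_pos.1 (by rw [(mem_simplices.1 hC).2.1]; norm_num)).mono hCn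

theorem octahedron_injOn : Set.InjOn (octahedron (ι := Fin 4)) (shell 4 : Finset (Fin 4 → ℤ)) := by
  intro n hn m hm hnm
  obtain ⟨x, hx⟩ := octahedron_nonempty hn
  have hmx := (mem_octahedron.1 (hnm ▸ hx)).2
  have hmnx := (mem_octahedron.1 (hnm ▸ sub_mem_octahedron hn hx)).2
  rw [dotProduct_sub, hmx] at hmnx
  by_contra hne
  have hlt := two_mul_dotProduct_lt hne
  rw [mem_shell.1 hn, mem_shell.1 hm, dotProduct_comm] at hlt
  omega

theorem exists_simplices_ssubset_octahedron (hn : n ∈ shell 4) :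
    ∃ C ∈ simplices (Fin 4) 3, C ⊂ octahedron n := by
  obtain ⟨C, hC, hCn⟩ := exists_simplices_subset_octahedron n hn
  refine ⟨C, hC, hCn.ssubset_of_ne ?_⟩
  rintro rfl
  obtain ⟨x, hx⟩ := octahedron_nonempty hn
  obtain ⟨hx2, hnx⟩ := mem_octahedron.1 hx
  have horth : x ⬝ᵥ (n - x) = 0 := by
    rw [dotProduct_sub, dotProduct_comm, hnx, mem_shell.1 hx2, sub_self]
  obtain hxn | hxn := eq_or_ne x (n - x)
  · rw [← hxn, mem_shell.1 hx2] at horth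
    norm_num at horth
  · rw [(mem_simplices.1 hC).2.2 x hx _ (sub_mem_octahedron hn hx) hxn] at horth
    norm_num at horth

end Octahedra

section FaceVertices

/-- The vertex sets of the `k`-dimensional proper faces of the 24-cell. -/
noncomputable def faceVertices (k : ℕ) : Finset (Finset (Fin 4 → ℤ)) :=
  if k = 3 then (shell 4).image octahedron else simplices (Fin 4) (k + 1)

theorem card_faceVertices :
    (faceVertices 0).card = 24 ∧ (faceVertices 1).card = 96 ∧ (faceVertices 2).card = 96 ∧
      (faceVertices 3).card = 24 := by
  refine ⟨by decide +kernel, by decide +kernel, by decide +kernel, ?_⟩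
  rw [faceVertices, if_pos rfl, Finset.card_image_of_injOn octahedron_injOn]
  decide +kernel

theorem card_le_three_of_mem_simplices {m : ℕ} {C : Finset (Fin 4 → ℤ)}
    (hC : C ∈ simplices (Fin 4) m) : C.card ≤ 3 := by
  obtain ⟨hsub, -, hadj⟩ := mem_simplices.1 hC
  by_contra! hcard
  obtain ⟨x, y, z, hx, hy, hz, hxy, hxz, hyz⟩ := Finset.two_lt_card_iff.1 (show 2 < C.card by omega)
  obtain ⟨t, ht, htxyz⟩ := Finset.exists_mem_notMem_of_card_lt_card
    ((Finset.card_le_three (a := x) (b := y) (c := z)).trans_lt hcard)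
  simp only [Finset.mem_insert, Finset.mem_singleton, not_or] at htxyz
  -- The fourth neighbour would have odd inner product with the facet normal `x + y - z`.
  have hxyz : x + y - z ∈ shell 4 := by
    simpa [add_dotProduct, hadj x hx y hy hxy, hadj x hx z hz hxz, hadj y hy z hz hyz] using
      sub_mem_shell (add_mem_shell (hsub hx) (hsub hy)) (hsub hz)
  have hodd : (x + y - z) ⬝ᵥ t = 1 := by
    simp [add_dotProduct, sub_dotProduct, hadj x hx t ht (Ne.symm htxyz.1),
      hadj y hy t ht (Ne.symm htxyz.2.1), hadj z hz t ht (Ne.symm htxyz.2.2)]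
  have heven := even_dotProduct_of_mem_shell _ hxyz t (hsub ht)
  rw [hodd] at heven
  exact absurd heven (by decide)

variable {M : Type*} [AddCommGroup M] [LinearOrder M] [IsOrderedAddMonoid M]
  {φ : (Fin 4 → ℤ) →+ M} {h : M} {C : Finset (Fin 4 → ℤ)} {x y : Fin 4 → ℤ}

theorem IsMaxLevelSet.eq_octahedron (hC : IsMaxLevelSet φ h (shell 2) C) (hh : 0 < h)
    (hx : x ∈ C) (hy : y ∈ C) (hn : x + y ∈ shell 4) : C = octahedron (x + y) := by
  have hφn : φ (x + y) = h + h := by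
    rw [map_add, ((hC.mem_iff x).1 hx).2, ((hC.mem_iff y).1 hy).2]
  ext z
  constructor
  · intro hz
    obtain ⟨hz2, hφz⟩ := (hC.mem_iff z).1 hz
    have hne : (x + y) ⬝ᵥ z ≠ 0 := by
      intro horth
      obtain ⟨w, hw, hnzw⟩ := exists_add_dotProduct_eq_three _ hn z hz2 horth
      -- A vector of height `3 h` cannot be a sum of two vertices.
      have hrest : x + y + z - w ∈ shell 2 := by
        simpa [horth, hnzw] using sub_mem_shell (add_mem_shell hn hz2) hw
      have hφrest := hC.le _ hrest
      have hφw := hC.le _ hw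
      rw [map_sub, map_add, hφn, hφz] at hφrest
      grind
    have hnonneg : 0 ≤ (x + y) ⬝ᵥ z := by
      rw [add_dotProduct]
      exact add_nonneg (hC.dotProduct_nonneg hh hx hz) (hC.dotProduct_nonneg hh hy hz)
    have hle := dotProduct_le_two_of_mem_shell hn hz2
    obtain ⟨r, hr⟩ := even_dotProduct_of_mem_shell _ hn z hz2
    exact mem_octahedron.2 ⟨hz2, by omega⟩
  · intro hz
    have hz2 := (mem_octahedron.1 hz).1
    have hφrest := hC.le _ (mem_octahedron.1 (sub_mem_octahedron hn hz)).1
    have hφz := hC.le _ hz2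
    rw [map_sub, hφn] at hφrest
    exact (hC.mem_iff z).2 ⟨hz2, by grind⟩

theorem IsMaxLevelSet.exists_mem_faceVertices (hC : IsMaxLevelSet φ h (shell 2) C) (hh : 0 < h)
    (hne : C.Nonempty) : ∃ k, C ∈ faceVertices k := by
  have hsub : C ⊆ shell 2 := fun x hx => ((hC.mem_iff x).1 hx).1
  by_cases horth : ∃ x ∈ C, ∃ y ∈ C, x ⬝ᵥ y = 0
  · obtain ⟨x, hx, y, hy, hxy⟩ := horth
    have hn : x + y ∈ shell 4 := by simpa [hxy] using add_mem_shell (hsub hx) (hsub hy)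
    refine ⟨3, ?_⟩
    rw [faceVertices, if_pos rfl, hC.eq_octahedron hh hx hy hn]
    exact Finset.mem_image_of_mem _ hn
  · push Not at horth
    have hmem : C ∈ simplices (Fin 4) C.card := mem_simplices.2 ⟨hsub, rfl, fun x hx y hy hxy => by
      have hle := dotProduct_le_one_of_mem_shell (hsub hx) (hsub hy) hxy
      have hnonneg := hC.dotProduct_nonneg hh hx hy
      have hne := horth x hx y hy
      omega⟩
    have hpos := hne.card_pos
    have hle := card_le_three_of_mem_simplices hmem
    refine ⟨C.card - 1, ?_⟩
    rwa [faceVertices, if_neg (by omega), Nat.sub_add_cancel hpos]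

theorem exists_isMaxLevelSet_of_mem_faceVertices {k : ℕ} (hC : C ∈ faceVertices k) :
    ∃ (n : Fin 4 → ℤ) (c : ℤ), 0 < c ∧ C.Nonempty ∧ IsMaxLevelSet (n ⬝ᵥ ·) c (shell 2) C := by
  rw [faceVertices] at hC
  split_ifs at hC with hk
  · obtain ⟨n, hn, rfl⟩ := Finset.mem_image.1 hC
    exact ⟨n, 2, two_pos, octahedron_nonempty hn, isMaxLevelSet_octahedron hn⟩
  · refine ⟨_, _, by positivity, Finset.card_pos.1 ?_, isMaxLevelSet_of_mem_simplices hC⟩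
    rw [(mem_simplices.1 hC).2.1]
    exact k.succ_pos

end FaceVertices

section IntegerModel

/-- The inclusion of the integer lattice in Euclidean space. -/
noncomputable def intToEuclidean {ι : Type*} : (ι → ℤ) →+ EuclideanSpace ℝ ι where
  toFun x := WithLp.toLp 2 fun i => (x i : ℝ)
  map_zero' := by ext; simp
  map_add' x y := by ext; simp

theorem inner_intToEuclidean {ι : Type*} [Fintype ι] (x y : ι → ℤ) :
    ⟪intToEuclidean x, intToEuclidean y⟫ = ((x ⬝ᵥ y : ℤ) : ℝ) := by
  simp [intToEuclidean, PiLp.inner_apply, dotProduct, mul_comm]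

theorem intToEuclidean_injective {ι : Type*} :
    Function.Injective (intToEuclidean : (ι → ℤ) → EuclideanSpace ℝ ι) := fun x y hxy => by
  ext i
  simpa [intToEuclidean] using congrArg (fun v => v i) hxy

theorem intToEuclidean_single (i : Fin 4) (s : ℤ) :
    intToEuclidean (Pi.single i s) = (s : ℝ) • stdV i := by
  ext j
  obtain rfl | hij := eq_or_ne j i <;> simp [intToEuclidean, stdV, *]

theorem mem_shell_two_iff {x : Fin 4 → ℤ} :
    x ∈ shell 2 ↔ ∃ i j : Fin 4, i ≠ j ∧ ∃ s t : ℤ, (s = 1 ∨ s = -1) ∧ (t = 1 ∨ t = -1) ∧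
      x = Pi.single i s + Pi.single j t := by
  constructor
  · have hsplit : ∀ x ∈ shell 2, ∃ i j : Fin 4, i ≠ j ∧ ∃ s ∈ ({1, -1} : Finset ℤ),
        ∃ t ∈ ({1, -1} : Finset ℤ), x = Pi.single i s + Pi.single j t := by
      decide +kernel
    intro hx
    obtain ⟨i, j, hij, s, hs, t, ht, rfl⟩ := hsplit x hx
    exact ⟨i, j, hij, s, t, by simpa using hs, by simpa using ht, rfl⟩
  · rintro ⟨i, j, hij, s, t, hs, ht, rfl⟩
    rw [mem_shell]
    obtain rfl | rfl := hs <;> obtain rfl | rfl := ht <;>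
      simp [hij, hij.symm]

theorem cellV_eq_image : cellV = intToEuclidean '' (shell 2 : Finset (Fin 4 → ℤ)) := by
  ext v
  constructor
  · rintro ⟨i, j, hij, ε, δ, hε, hδ, rfl⟩
    obtain ⟨s, hs, rfl⟩ : ∃ s : ℤ, (s = 1 ∨ s = -1) ∧ (s : ℝ) = ε := by
      obtain rfl | rfl := hε
      exacts [⟨1, by simp⟩, ⟨-1, by simp⟩]
    obtain ⟨t, ht, rfl⟩ : ∃ t : ℤ, (t = 1 ∨ t = -1) ∧ (t : ℝ) = δ := by
      obtain rfl | rfl := hδ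
      exacts [⟨1, by simp⟩, ⟨-1, by simp⟩]
    exact ⟨_, mem_shell_two_iff.2 ⟨i, j, hij, s, t, hs, ht, rfl⟩,
      by rw [map_add, intToEuclidean_single, intToEuclidean_single]⟩
  · rintro ⟨x, hx, rfl⟩
    obtain ⟨i, j, hij, s, t, hs, ht, rfl⟩ := mem_shell_two_iff.1 hx
    refine ⟨i, j, hij, s, t, ?_, ?_, by
      rw [map_add, intToEuclidean_single, intToEuclidean_single]⟩
    · exact_mod_cast hs
    · exact_mod_cast ht

variable {C : Finset (Fin 4 → ℤ)} {S : Set (EuclideanSpace ℝ (Fin 4))} {n : Fin 4 → ℤ} {c : ℤ}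
  {k : ℕ}

theorem exists_isMaxLevelSet_of_mem_properFaces (hS : S ∈ properFaces cellV) :
    ∃ (φ : (Fin 4 → ℤ) →+ ℝ) (h : ℝ) (C : Finset (Fin 4 → ℤ)), 0 < h ∧ C.Nonempty ∧
      IsMaxLevelSet φ h (shell 2) C ∧ intToEuclidean '' C = S := by
  obtain ⟨⟨v, hv⟩, hne, l, rfl⟩ := mem_properFaces_iff.1 hS
  rw [cellV_eq_image] at hv hne ⊢
  obtain ⟨⟨x, hx, rfl⟩, hmax⟩ := hv
  let φ : (Fin 4 → ℤ) →+ ℝ := (l : EuclideanSpace ℝ (Fin 4) →+ ℝ).comp intToEuclidean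
  have hC : IsMaxLevelSet φ (φ x) (shell 2) {y ∈ shell 2 | φ y = φ x} :=
    ⟨fun y hy => hmax _ (Set.mem_image_of_mem _ hy), fun _ => Finset.mem_filter⟩
  have hCne : ({y ∈ shell 2 | φ y = φ x} : Finset (Fin 4 → ℤ)).Nonempty :=
    ⟨x, Finset.mem_filter.2 ⟨hx, rfl⟩⟩
  have himage := hC.image_eq_toExposed (g := intToEuclidean) (l := l) hCne
  refine ⟨φ, φ x, _, (hC.pos_iff_ne_shell (map_neg φ) hCne).2 fun h => hne ?_, hCne, hC, himage⟩
  rw [← himage, h]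

theorem IsMaxLevelSet.image_mem_properFaces (hC : IsMaxLevelSet (n ⬝ᵥ ·) c (shell 2) C)
    (hc : 0 < c) (hne : C.Nonempty) : intToEuclidean '' C ∈ properFaces cellV := by
  have hl : IsMaxLevelSet (fun x => innerSL ℝ (intToEuclidean n) (intToEuclidean x)) (c : ℝ)
      (shell 2) C := by
    simp only [innerSL_apply_apply, inner_intToEuclidean]
    exact ⟨fun x hx => Int.cast_le.2 (hC.le x hx), fun x => by rw [hC.mem_iff, Int.cast_inj]⟩
  rw [cellV_eq_image]
  refine mem_properFaces_iff.2 ⟨hne.to_set.image _, fun h => ?_, _, hl.image_eq_toExposed hne⟩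
  exact (hC.pos_iff_ne_shell (dotProduct_neg n) hne).1 hc
    (Finset.coe_injective (intToEuclidean_injective.image_injective h))

theorem image_mem_properFaces_of_mem_faceVertices (hC : C ∈ faceVertices k) :
    intToEuclidean '' C ∈ properFaces cellV := by
  obtain ⟨n, c, hc, hne, hmax⟩ := exists_isMaxLevelSet_of_mem_faceVertices hC
  exact hmax.image_mem_properFaces hc hne

theorem faceDim_image_of_mem_simplices (hC : C ∈ simplices (Fin 4) (k + 1)) :
    faceDim (intToEuclidean '' C) = k := by
  obtain ⟨hsub, hcard, hadj⟩ := mem_simplices.1 hC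
  have hindep : AffineIndependent ℝ fun x : C => intToEuclidean (x : Fin 4 → ℤ) := by
    refine affineIndependent_of_inner_eq (c := 1) (d := 2) (by norm_num) (fun x => ?_)
      fun x y hxy => ?_
    · rw [inner_intToEuclidean, mem_shell.1 (hsub x.2), Int.cast_ofNat]
    · rw [inner_intToEuclidean, hadj x x.2 y y.2 (Subtype.coe_injective.ne hxy), Int.cast_one]
  rw [faceDim_eq_finrank_vectorSpan, Set.image_eq_range]
  exact hindep.finrank_vectorSpan (by simpa using hcard)

theorem faceDim_image_octahedron (hn : n ∈ shell 4) :
    faceDim (intToEuclidean '' octahedron n) = 3 := by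
  have hface : intToEuclidean '' octahedron n ∈ properFaces cellV :=
    (isMaxLevelSet_octahedron hn).image_mem_properFaces two_pos (octahedron_nonempty hn)
  obtain ⟨C, hC, hCn⟩ := exists_simplices_ssubset_octahedron hn
  have hCface : intToEuclidean '' C ∈ properFaces (intToEuclidean '' octahedron n) :=
    mem_properFaces_of_ssubset (image_mem_properFaces_of_mem_faceVertices (k := 2) hC)
      (intToEuclidean_injective.image_strictMono (Finset.coe_ssubset.2 hCn)) hface.2.1.subset
  have hlt := faceDim_lt_of_mem_properFaces hCface
  rw [faceDim_image_of_mem_simplices hC] at hlt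
  have hgt := (faceDim_lt_of_mem_properFaces hface).trans_le (faceDim_le_four cellV)
  omega

theorem faceDim_image_of_mem_faceVertices (hC : C ∈ faceVertices k) :
    faceDim (intToEuclidean '' C) = k := by
  rw [faceVertices] at hC
  split_ifs at hC with hk
  · obtain ⟨n, hn, rfl⟩ := Finset.mem_image.1 hC
    rw [faceDim_image_octahedron hn, hk]
  · exact faceDim_image_of_mem_simplices hC

theorem properFaces_cellV_faceDim_eq_image (k : ℕ) :
    {S ∈ properFaces cellV | faceDim S = k} =
      (fun C : Finset (Fin 4 → ℤ) => intToEuclidean '' C) '' faceVertices k := by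
  ext S
  constructor
  · rintro ⟨hS, rfl⟩
    obtain ⟨φ, h, C, hh, hne, hC, rfl⟩ := exists_isMaxLevelSet_of_mem_properFaces hS
    obtain ⟨j, hj⟩ := hC.exists_mem_faceVertices hh hne
    rw [faceDim_image_of_mem_faceVertices hj]
    exact ⟨C, hj, rfl⟩
  · rintro ⟨C, hC, rfl⟩
    exact ⟨image_mem_properFaces_of_mem_faceVertices hC, faceDim_image_of_mem_faceVertices hC⟩

theorem ncard_properFaces_cell24 (k : ℕ) :
    {F ∈ properFaces (convexHull ℝ cellV) | faceDim F = k}.ncard = (faceVertices k).card := by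
  rw [ncard_properFaces_convexHull, properFaces_cellV_faceDim_eq_image]
  exact (Set.ncard_image_of_injective _ (intToEuclidean_injective.image_injective.comp
    Finset.coe_injective)).trans (Set.ncard_coe_finset _)

end IntegerModel

/-- The f-vector of the 24-cell is `(24, 96, 96, 24)`. -/
theorem cell24_fvector :
    ({F ∈ properFaces (convexHull ℝ cellV) | faceDim F = 0}).ncard = 24 ∧
    ({F ∈ properFaces (convexHull ℝ cellV) | faceDim F = 1}).ncard = 96 ∧
    ({F ∈ properFaces (convexHull ℝ cellV) | faceDim F = 2}).ncard = 96 ∧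
    ({F ∈ properFaces (convexHull ℝ cellV) | faceDim F = 3}).ncard = 24 := by
  simpa only [ncard_properFaces_cell24] using card_faceVertices
end

section
/- For the hypercube H = { x ∈ EuclideanSpace ℝ (Fin 4) : ∀ i, |x i| ≤ 1 }: every 3-dimensional proper exposed face F of H has exactly 8 extreme points and the barycentre (1/8) • ∑ of these extreme points lies in G, and the resulting map is a bijection from the set of 3-dimensional proper exposed faces of H onto G; likewise every 2-dimensional proper exposed face of H has exactly 4 extreme points whose barycentre (1/4) • ∑ lies in V, and the resulting map is a bijection from the set of 2-dimensional proper exposed faces of H onto V. -/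
open scoped RealInnerProductSpace Pointwise

/-- The hypercube `[-1,1]⁴`. -/
def hyperCube : Set (EuclideanSpace ℝ (Fin 4)) :=
  {x | ∀ i, |x i| ≤ 1}

/-- The barycentre of the extreme points of a face, normalised by `n`. -/
noncomputable def bary (n : ℝ) (F : Set (EuclideanSpace ℝ (Fin 4))) :
    EuclideanSpace ℝ (Fin 4) :=
  (1 / n) • ∑ᶠ x ∈ F.extremePoints ℝ, x

/-!
A linear functional `⟪w, ·⟫` is maximised over `[-1, 1]^ι` one coordinate at a time, so the face it
exposes only depends on the signs of the coordinates of `w`: it is the product of the points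
`sign (w i)` with `w i ≠ 0` and of the intervals `[-1, 1]` with `w i = 0`. The proper exposed faces
are thus indexed by the nonzero sign patterns `σ`, the dimension being the number `k` of zeros of
`σ`. Extreme points of a product are products of extreme points, so such a face has `2 ^ k` of them;
the vector `σ` itself is a centre of symmetry of the face and hence the barycentre of its extreme
points.
-/

section Preliminaries

theorem isMaxOn_sum_univ_pi_iff {ι M : Type*} {α : ι → Type*} [Fintype ι] [AddCommMonoid M]
    [PartialOrder M] [IsOrderedCancelAddMonoid M] {K : ∀ i, Set (α i)} {f : ∀ i, α i → M}
    {x : ∀ i, α i} (hx : x ∈ Set.univ.pi K) :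
    IsMaxOn (fun y => ∑ i, f i (y i)) (Set.univ.pi K) x ↔ ∀ i, IsMaxOn (f i) (K i) (x i) := by
  classical
  refine ⟨fun h i t ht => ?_, fun h y hy => Finset.sum_le_sum fun i _ => h i (hy i trivial)⟩
  have hle := h ((Set.update_mem_pi_iff_of_mem hx).2 fun _ => ht)
  have hrest : ∑ j ∈ Finset.univ.erase i, f j (Function.update x i t j) =
      ∑ j ∈ Finset.univ.erase i, f j (x j) :=
    Finset.sum_congr rfl fun j hj => by rw [Function.update_of_ne (Finset.ne_of_mem_erase hj)]
  simp only [Set.mem_ofPred_eq, ← Finset.add_sum_erase _ _ (Finset.mem_univ i), hrest,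
    Function.update_self] at hle
  exact le_of_add_le_add_right hle

theorem preimage_extremePoints {𝕜 E F : Type*} [Ring 𝕜] [PartialOrder 𝕜] [IsOrderedRing 𝕜]
    [AddCommGroup E] [Module 𝕜 E] [AddCommGroup F] [Module 𝕜 F] (e : E ≃ₗ[𝕜] F) (s : Set F) :
    e ⁻¹' s.extremePoints 𝕜 = (e ⁻¹' s).extremePoints 𝕜 := by
  simpa only [LinearEquiv.image_symm_eq_preimage] using image_extremePoints e.symm s

theorem finsum_mem_eq_ncard_nsmul_of_pointReflection_mem {E : Type*} [AddCommGroup E]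
    [IsAddTorsionFree E] {s : Set E} (hs : s.Finite) {c : E}
    (hc : ∀ x ∈ s, Equiv.pointReflection c x ∈ s) : ∑ᶠ x ∈ s, x = s.ncard • c := by
  have hbij : Set.BijOn (Equiv.pointReflection c) s s :=
    ⟨hc, (Equiv.injective _).injOn, fun x hx => ⟨_, hc x hx, Equiv.pointReflection_involutive c x⟩⟩
  have hsum : ∑ᶠ x ∈ s, Equiv.pointReflection c x = ∑ᶠ x ∈ s, x :=
    finsum_mem_eq_of_bijOn _ hbij fun _ _ => rfl
  refine nsmul_right_injective two_ne_zero ?_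
  calc 2 • ∑ᶠ x ∈ s, x = ∑ᶠ x ∈ s, (Equiv.pointReflection c x + x) := by
        rw [two_nsmul, finsum_mem_add_distrib hs, hsum]
    _ = ∑ᶠ x ∈ s, (c + c) :=
        finsum_mem_congr rfl fun x _ => by
          simp only [Equiv.pointReflection_apply, vsub_eq_sub, vadd_eq_add]
          abel
    _ = 2 • s.ncard • c := by
        rw [finsum_mem_eq_finite_toFinset_sum _ hs, Finset.sum_const,
          ← Set.ncard_eq_toFinset_card s hs, ← two_nsmul, smul_comm]

theorem card_filter_eq_iff_card_filter_not_eq {α : Type*} {s : Finset α} (p : α → Prop)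
    [DecidablePred p] [∀ a, Decidable (¬p a)] {k m : ℕ} (hkm : k + m = s.card) :
    (s.filter p).card = k ↔ (s.filter fun a => ¬p a).card = m := by
  have h := Finset.card_filter_add_card_filter_not (s := s) p
  omega

/-- The proper exposed faces of a set in a real topological vector space. -/
def properExposedFaces {E : Type*} [AddCommGroup E] [Module ℝ E] [TopologicalSpace E] (K : Set E) :
    Set (Set E) :=
  {F | F.Nonempty ∧ F ⊂ K ∧ IsExposed ℝ K F}

end Preliminaries

section Interval

theorem sign_coe_signType (s : SignType) : SignType.sign (s : ℝ) = s := by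
  cases s <;> simp

/-- The face of the interval `[-1, 1]` with centre `s`: the whole interval for `s = 0`, and the
endpoint `s` otherwise. -/
def intervalFace (s : SignType) : Set ℝ :=
  if s = 0 then Set.Icc (-1) 1 else {(s : ℝ)}

theorem coe_mem_intervalFace (s : SignType) : (s : ℝ) ∈ intervalFace s := by
  cases s <;> simp [intervalFace]

theorem intervalFace_subset_Icc (s : SignType) : intervalFace s ⊆ Set.Icc (-1) 1 := by
  cases s <;> simp [intervalFace]

theorem setOf_isMaxOn_mul_Icc (a : ℝ) :
    {t ∈ Set.Icc (-1 : ℝ) 1 | IsMaxOn (a * ·) (Set.Icc (-1) 1) t} =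
      intervalFace (SignType.sign a) := by
  ext t
  simp only [Set.mem_ofPred_eq, isMaxOn_iff, Set.mem_Icc]
  rcases lt_trichotomy a 0 with ha | rfl | ha
  · simp only [intervalFace, sign_neg ha, if_neg (show (-1 : SignType) ≠ 0 by decide),
      mul_le_mul_left_of_neg ha, SignType.coe_neg_one, Set.mem_singleton_iff]
    refine ⟨fun h => le_antisymm (h.2 (-1) (by norm_num)) h.1.1, ?_⟩
    rintro rfl
    exact ⟨by norm_num, fun y hy => hy.1⟩
  · simp [intervalFace]
  · simp only [intervalFace, sign_pos ha, if_neg (show (1 : SignType) ≠ 0 by decide),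
      mul_le_mul_iff_right₀ ha, SignType.coe_one, Set.mem_singleton_iff]
    refine ⟨fun h => le_antisymm h.1.2 (h.2 1 (by norm_num)), ?_⟩
    rintro rfl
    exact ⟨by norm_num, fun y hy => hy.2⟩

theorem extremePoints_intervalFace (s : SignType) :
    (intervalFace s).extremePoints ℝ = if s = 0 then {-1, 1} else {(s : ℝ)} := by
  rw [intervalFace, apply_ite (Set.extremePoints ℝ), Set.extremePoints_Icc (by norm_num),
    extremePoints_singleton]

theorem encard_extremePoints_intervalFace (s : SignType) :
    ((intervalFace s).extremePoints ℝ).encard = if s = 0 then 2 else 1 := by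
  rw [extremePoints_intervalFace, apply_ite Set.encard, Set.encard_pair (by norm_num),
    Set.encard_singleton]

theorem pointReflection_mem_extremePoints_intervalFace {s : SignType} {t : ℝ}
    (ht : t ∈ (intervalFace s).extremePoints ℝ) :
    Equiv.pointReflection (s : ℝ) t ∈ (intervalFace s).extremePoints ℝ := by
  rw [extremePoints_intervalFace] at ht ⊢
  split_ifs at ht ⊢ with hs
  · rcases ht with rfl | rfl <;> simp [hs, Equiv.pointReflection_apply]
  · obtain rfl := ht
    simp

end Interval

section Cube

open scoped Finset

variable {ι : Type*}

/-- The cube `[-1, 1]^ι`. -/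
def cube (ι : Type*) : Set (EuclideanSpace ℝ ι) :=
  {x | ∀ i, |x i| ≤ 1}

/-- A sign pattern, viewed as a vector with coordinates in `{-1, 0, 1}`; these are the centres of
the faces of the cube. -/
def signVec (σ : ι → SignType) : EuclideanSpace ℝ ι :=
  WithLp.toLp 2 fun i => (σ i : ℝ)

/-- The face of the cube with centre `signVec σ`: the coordinates in the support of `σ` are fixed,
the others range over `[-1, 1]`. -/
def cubeFace (σ : ι → SignType) : Set (EuclideanSpace ℝ ι) :=
  WithLp.ofLp ⁻¹' Set.univ.pi fun i => intervalFace (σ i)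

theorem cube_eq_preimage_pi_Icc :
    cube ι = WithLp.ofLp ⁻¹' Set.univ.pi fun _ => Set.Icc (-1) 1 := by
  ext x
  simp only [cube, abs_le, Set.mem_preimage, Set.mem_univ_pi, Set.mem_Icc, Set.mem_ofPred_eq]

theorem cubeFace_zero : cubeFace (0 : ι → SignType) = cube ι := by
  simp [cubeFace, intervalFace, cube_eq_preimage_pi_Icc]

theorem cubeFace_subset_cube (σ : ι → SignType) : cubeFace σ ⊆ cube ι := by
  rw [cube_eq_preimage_pi_Icc]
  exact Set.preimage_mono (Set.pi_mono fun i _ => intervalFace_subset_Icc (σ i))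

theorem signVec_injective : Function.Injective (signVec (ι := ι)) := by
  intro σ τ h
  ext i
  have hi : (σ i : ℝ) = τ i := congrArg (· i) h
  rw [← sign_coe_signType (σ i), hi, sign_coe_signType]

theorem signVec_mem_cubeFace (σ : ι → SignType) : signVec σ ∈ cubeFace σ :=
  fun i _ => coe_mem_intervalFace (σ i)

theorem cubeFace_ssubset_cube_iff {σ : ι → SignType} : cubeFace σ ⊂ cube ι ↔ σ ≠ 0 := by
  rw [Set.ssubset_iff_subset_ne, and_iff_right (cubeFace_subset_cube σ), ← cubeFace_zero,
    not_iff_not]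
  refine ⟨fun h => funext fun i => ?_, congrArg cubeFace⟩
  have hmem : (0 : ℝ) ∈ intervalFace (σ i) := by
    simpa [signVec] using (h ▸ signVec_mem_cubeFace (0 : ι → SignType)) i trivial
  generalize σ i = s at hmem
  cases s <;> simp [intervalFace] at hmem ⊢

theorem toExposed_cube [Fintype ι] (w : EuclideanSpace ℝ ι) :
    (innerSL ℝ w).toExposed (cube ι) = cubeFace fun i => SignType.sign (w i) := by
  ext x
  have hmax : x ∈ cube ι → ((∀ y ∈ cube ι, ⟪w, y⟫ ≤ ⟪w, x⟫) ↔
      ∀ i, IsMaxOn (w i * ·) (Set.Icc (-1) 1) (x i)) := by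
    simp only [cube_eq_preimage_pi_Icc, PiLp.inner_apply, Real.inner_apply]
    intro hx
    rw [← isMaxOn_sum_univ_pi_iff hx]
    exact ((WithLp.ofLp_surjective 2).forall (p := fun y =>
      y ∈ Set.univ.pi (fun _ => Set.Icc (-1) 1) → ∑ i, w i * y i ≤ ∑ i, w i * x i)).symm
  calc x ∈ (innerSL ℝ w).toExposed (cube ι)
    _ ↔ x ∈ cube ι ∧ ∀ i, IsMaxOn (w i * ·) (Set.Icc (-1) 1) (x i) := and_congr_right hmax
    _ ↔ ∀ i, x i ∈ {t ∈ Set.Icc (-1 : ℝ) 1 | IsMaxOn (w i * ·) (Set.Icc (-1) 1) t} := by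
        simp only [cube_eq_preimage_pi_Icc, Set.mem_preimage, Set.mem_univ_pi, ← forall_and,
          Set.mem_ofPred_eq]
    _ ↔ x ∈ cubeFace fun i => SignType.sign (w i) := by
        simp only [setOf_isMaxOn_mul_Icc, cubeFace, Set.mem_preimage, Set.mem_univ_pi]

theorem properExposedFaces_cube [Finite ι] :
    properExposedFaces (cube ι) = cubeFace '' {σ | σ ≠ 0} := by
  have := Fintype.ofFinite ι
  ext F
  constructor
  · rintro ⟨hne, hss, hexp⟩
    obtain ⟨l, hl⟩ := hexp hne
    obtain ⟨w, rfl⟩ := (InnerProductSpace.toDual ℝ (EuclideanSpace ℝ ι)).surjective l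
    obtain rfl : F = cubeFace fun i => SignType.sign (w i) := hl.trans (toExposed_cube w)
    exact ⟨_, cubeFace_ssubset_cube_iff.1 hss, rfl⟩
  · rintro ⟨σ, hσ, rfl⟩
    refine ⟨⟨_, signVec_mem_cubeFace σ⟩, cubeFace_ssubset_cube_iff.2 hσ, ?_⟩
    have hface : (innerSL ℝ (signVec σ)).toExposed (cube ι) = cubeFace σ := by
      simp only [toExposed_cube, signVec, sign_coe_signType]
    exact hface ▸ ContinuousLinearMap.toExposed.isExposed

theorem vectorSpan_cubeFace [Fintype ι] (σ : ι → SignType) :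
    vectorSpan ℝ (cubeFace σ) =
      Submodule.span ℝ (Set.range fun i : {i // σ i = 0} => EuclideanSpace.basisFun ι ℝ i) := by
  classical
  refine le_antisymm (Submodule.span_le.2 ?_) (Submodule.span_le.2 ?_)
  · rintro _ ⟨x, hx, y, hy, rfl⟩
    change x -ᵥ y ∈ Submodule.span ℝ _
    rw [← (EuclideanSpace.basisFun ι ℝ).sum_repr (x -ᵥ y)]
    refine Submodule.sum_mem _ fun i _ => ?_
    by_cases hi : σ i = 0
    · exact Submodule.smul_mem _ _ (Submodule.subset_span ⟨⟨i, hi⟩, rfl⟩)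
    · have hxi : x i ∈ intervalFace (σ i) := hx i trivial
      have hyi : y i ∈ intervalFace (σ i) := hy i trivial
      rw [intervalFace, if_neg hi] at hxi hyi
      have hxy : x i = y i := hxi.trans hyi.symm
      simp [hxy]
  · rintro _ ⟨⟨i, hi⟩, rfl⟩
    have hmem : signVec (Function.update σ i 1) ∈ cubeFace σ := by
      intro j _
      obtain rfl | hj := eq_or_ne j i
      · simp [signVec, intervalFace, hi]
      · simpa [signVec, hj] using coe_mem_intervalFace (σ j)
    have hsub : signVec (Function.update σ i 1) -ᵥ signVec σ = EuclideanSpace.basisFun ι ℝ i := by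
      ext j
      obtain rfl | hj := eq_or_ne j i
      · simp [signVec, hi]
      · simp [signVec, hj]
    change EuclideanSpace.basisFun ι ℝ i ∈ vectorSpan ℝ (cubeFace σ)
    exact hsub ▸ vsub_mem_vectorSpan ℝ hmem (signVec_mem_cubeFace σ)

theorem finrank_direction_affineSpan_cubeFace [Fintype ι] (σ : ι → SignType) :
    Module.finrank ℝ (affineSpan ℝ (cubeFace σ)).direction = #{i | σ i = 0} := by
  rw [direction_affineSpan, vectorSpan_cubeFace, ← Fintype.card_subtype]
  exact finrank_span_eq_card
    ((EuclideanSpace.basisFun ι ℝ).orthonormal.linearIndependent.comp _ Subtype.val_injective)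

theorem extremePoints_cubeFace (σ : ι → SignType) :
    (cubeFace σ).extremePoints ℝ =
      WithLp.ofLp ⁻¹' Set.univ.pi fun i => (intervalFace (σ i)).extremePoints ℝ := by
  rw [← extremePoints_pi]
  exact (preimage_extremePoints (WithLp.linearEquiv 2 ℝ (ι → ℝ)) _).symm

theorem ncard_extremePoints_cubeFace [Fintype ι] (σ : ι → SignType) :
    ((cubeFace σ).extremePoints ℝ).ncard = 2 ^ #{i | σ i = 0} := by
  rw [Set.ncard_def, extremePoints_cubeFace,
    Set.encard_preimage_of_bijective (WithLp.ofLp_bijective 2), Set.encard_pi_eq_prod_encard]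
  simp [encard_extremePoints_intervalFace, Finset.prod_ite]

theorem finsum_extremePoints_cubeFace [Fintype ι] (σ : ι → SignType) :
    ∑ᶠ x ∈ (cubeFace σ).extremePoints ℝ, x = 2 ^ #{i | σ i = 0} • signVec σ := by
  have hfin : ((cubeFace σ).extremePoints ℝ).Finite :=
    Set.finite_of_ncard_ne_zero (by simp [ncard_extremePoints_cubeFace])
  have : IsAddTorsionFree (EuclideanSpace ℝ ι) := .of_module_rat _
  rw [← ncard_extremePoints_cubeFace]
  refine finsum_mem_eq_ncard_nsmul_of_pointReflection_mem hfin fun x hx => ?_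
  rw [extremePoints_cubeFace] at hx ⊢
  exact fun i _ => pointReflection_mem_extremePoints_intervalFace (hx i trivial)

/-- The sums of `m` distinct standard basis vectors of `ℝ^ι` with signs. -/
def signedBasisSums (ι : Type*) [Fintype ι] (m : ℕ) : Set (EuclideanSpace ℝ ι) :=
  {x | ∃ s : Finset ι, #s = m ∧ ∃ ε : ι → ℝ, (∀ i ∈ s, ε i = 1 ∨ ε i = -1) ∧
    x = ∑ i ∈ s, ε i • EuclideanSpace.basisFun ι ℝ i}

theorem signVec_eq_sum_support [Fintype ι] (σ : ι → SignType) :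
    signVec σ = ∑ i with σ i ≠ 0, (σ i : ℝ) • EuclideanSpace.basisFun ι ℝ i := by
  have h := (EuclideanSpace.basisFun ι ℝ).sum_repr (signVec σ)
  simp only [EuclideanSpace.basisFun_repr] at h
  rw [Finset.sum_filter_of_ne, ← h]
  · rfl
  · rintro i - hi h0
    simp [h0] at hi

theorem image_signVec_setOf_card_support_eq [Fintype ι] (m : ℕ) :
    signVec '' {σ : ι → SignType | #{i | σ i ≠ 0} = m} = signedBasisSums ι m := by
  classical
  ext x
  constructor
  · rintro ⟨σ, hσ, rfl⟩
    refine ⟨_, hσ, fun i => σ i, fun i hi => ?_, signVec_eq_sum_support σ⟩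
    have hne := (Finset.mem_filter.1 hi).2
    obtain h | h | h := (σ i).trichotomy
    · simp [h]
    · exact absurd h hne
    · simp [h]
  · rintro ⟨s, rfl, ε, hε, rfl⟩
    have hcoe : ∀ i ∈ s, SignType.sign (ε i) ≠ 0 ∧ (SignType.sign (ε i) : ℝ) = ε i := by
      intro i hi
      rcases hε i hi with h | h <;> simp [h]
    let σ : ι → SignType := fun i => if i ∈ s then SignType.sign (ε i) else 0
    have hsupp : ({i | σ i ≠ 0} : Finset ι) = s := by
      ext i
      by_cases hi : i ∈ s
      · simpa [σ, hi] using (hcoe i hi).1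
      · simp [σ, hi]
    refine ⟨σ, congrArg Finset.card hsupp, ?_⟩
    rw [signVec_eq_sum_support, hsupp]
    refine Finset.sum_congr rfl fun i hi => ?_
    simp only [σ, if_pos hi, (hcoe i hi).2]

theorem setOf_properExposedFaces_cube_finrank_eq [Fintype ι] {k m : ℕ}
    (hkm : k + m = Fintype.card ι) (hm : m ≠ 0) :
    {F ∈ properExposedFaces (cube ι) | Module.finrank ℝ (affineSpan ℝ F).direction = k} =
      cubeFace '' {σ | #{i | σ i ≠ 0} = m} := by
  rw [properExposedFaces_cube]
  ext F
  constructor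
  · rintro ⟨⟨σ, -, rfl⟩, hk⟩
    rw [finrank_direction_affineSpan_cubeFace] at hk
    exact ⟨σ, (card_filter_eq_iff_card_filter_not_eq (σ · = 0) hkm).1 hk, rfl⟩
  · rintro ⟨σ, hσ, rfl⟩
    refine ⟨⟨σ, ?_, rfl⟩, ?_⟩
    · rintro rfl
      simp [hm.symm] at hσ
    · rw [finrank_direction_affineSpan_cubeFace]
      exact (card_filter_eq_iff_card_filter_not_eq (σ · = 0) hkm).2 hσ

theorem hypercube_face_barycentres_general [Fintype ι] {k m : ℕ} (hkm : k + m = Fintype.card ι)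
    (hm : m ≠ 0) :
    (∀ F ∈ {F ∈ properExposedFaces (cube ι) | Module.finrank ℝ (affineSpan ℝ F).direction = k},
        (F.extremePoints ℝ).ncard = 2 ^ k ∧
          (1 / 2 ^ k : ℝ) • ∑ᶠ x ∈ F.extremePoints ℝ, x ∈ signedBasisSums ι m) ∧
    Set.BijOn (fun F => (1 / 2 ^ k : ℝ) • ∑ᶠ x ∈ F.extremePoints ℝ, x)
      {F ∈ properExposedFaces (cube ι) | Module.finrank ℝ (affineSpan ℝ F).direction = k}
      (signedBasisSums ι m) := by
  set mean : Set (EuclideanSpace ℝ ι) → EuclideanSpace ℝ ι :=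
    fun F => (1 / 2 ^ k : ℝ) • ∑ᶠ x ∈ F.extremePoints ℝ, x
  set T : Set (ι → SignType) := {σ | #{i | σ i ≠ 0} = m}
  have hcard : ∀ σ ∈ T, #{i | σ i = 0} = k := fun σ =>
    (card_filter_eq_iff_card_filter_not_eq (σ · = 0) hkm).2
  have hcentre : ∀ σ ∈ T, signVec σ = mean (cubeFace σ) := by
    intro σ hσ
    change signVec σ = (1 / 2 ^ k : ℝ) • ∑ᶠ x ∈ (cubeFace σ).extremePoints ℝ, x
    rw [finsum_extremePoints_cubeFace, hcard σ hσ, ← Nat.cast_smul_eq_nsmul ℝ, smul_smul]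
    simp
  have hcomp : Set.BijOn (mean ∘ cubeFace) T (signedBasisSums ι m) := by
    rw [← image_signVec_setOf_card_support_eq]
    exact signVec_injective.injOn.bijOn_image.congr hcentre
  have hbij : Set.BijOn mean (cubeFace '' T) (signedBasisSums ι m) :=
    ⟨Set.mapsTo_image_iff.2 hcomp.mapsTo, hcomp.injOn.image_of_comp, by
      simpa only [Set.SurjOn, Set.image_comp] using hcomp.surjOn⟩
  rw [setOf_properExposedFaces_cube_finrank_eq hkm hm]
  refine ⟨fun F hF => ⟨?_, hbij.mapsTo hF⟩, hbij⟩
  obtain ⟨σ, hσ, rfl⟩ := hF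
  rw [ncard_extremePoints_cubeFace, hcard σ hσ]

end Cube

theorem colG_eq_signedBasisSums : colG = signedBasisSums (Fin 4) 1 := by
  ext x
  simp only [colG, signedBasisSums, Finset.card_eq_one, Set.mem_ofPred_eq]
  constructor
  · rintro ⟨i, rfl | rfl⟩
    · exact ⟨{i}, ⟨i, rfl⟩, fun _ => 1, by simp [stdV]⟩
    · exact ⟨{i}, ⟨i, rfl⟩, fun _ => -1, by simp [stdV]⟩
  · rintro ⟨_, ⟨i, rfl⟩, ε, hε, rfl⟩
    refine ⟨i, ?_⟩
    rcases hε i (Finset.mem_singleton_self i) with h | h <;> simp [h, stdV]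

theorem cellV_eq_signedBasisSums : cellV = signedBasisSums (Fin 4) 2 := by
  ext x
  simp only [cellV, signedBasisSums, Finset.card_eq_two, Set.mem_ofPred_eq]
  constructor
  · rintro ⟨i, j, hij, ε, δ, hε, hδ, rfl⟩
    refine ⟨{i, j}, ⟨i, j, hij, rfl⟩, fun l => if l = i then ε else δ, ?_, ?_⟩
    · simp [hε, hδ, hij.symm]
    · simp [Finset.sum_pair hij, hij.symm, stdV]
  · rintro ⟨_, ⟨i, j, hij, rfl⟩, ε, hε, rfl⟩
    refine ⟨i, j, hij, ε i, ε j, hε i (by simp), hε j (by simp), ?_⟩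
    simp [Finset.sum_pair hij, stdV]

/-- The barycentres of the 3-dimensional faces of the hypercube form the set `G`, and
the barycentres of its 2-dimensional faces form the set `V`, bijectively. -/
theorem hypercube_face_barycentres :
    (∀ F ∈ {F ∈ properFaces hyperCube | faceDim F = 3},
        (F.extremePoints ℝ).ncard = 8 ∧ bary 8 F ∈ colG) ∧
    Set.BijOn (bary 8) {F ∈ properFaces hyperCube | faceDim F = 3} colG ∧
    (∀ F ∈ {F ∈ properFaces hyperCube | faceDim F = 2},
        (F.extremePoints ℝ).ncard = 4 ∧ bary 4 F ∈ cellV) ∧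
    Set.BijOn (bary 4) {F ∈ properFaces hyperCube | faceDim F = 2} cellV := by
  have h₃ := hypercube_face_barycentres_general (ι := Fin 4) (k := 3) (m := 1) rfl one_ne_zero
  have h₂ := hypercube_face_barycentres_general (ι := Fin 4) (k := 2) (m := 2) rfl two_ne_zero
  rw [← colG_eq_signedBasisSums] at h₃
  rw [← cellV_eq_signedBasisSums] at h₂
  norm_num only at h₃ h₂
  exact ⟨h₃.1, h₃.2, h₂⟩
end
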